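/- The set of vectors of (3E₈⊕H)⊗ℝ fixed pointwise by every ℍ-linear isometry of (3E₈⊕H)⊗ℝ that permutes the 14 roots of the diagram D, taking points to points and lines to lines via a collineation of P²(𝔽₂), is exactly the 2-dimensional right ℍ-subspace w_Pℍ + w_Lℍ spanned by w_P and w_L. -/

import Mathlib

/- Formalization over the ring ℋ of Hurwitz integers inside the real quaternions. -/

noncomputable section
open Quaternion Finset

/-- The real quaternions ℍ. -/
abbrev Quat := Quaternion ℝ

/-- The quaternion `i`. -/
def qi : Quat := ⟨0, 1, 0, 0⟩
/-- The quaternion `j`. -/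
def qj : Quat := ⟨0, 0, 1, 0⟩
/-- The quaternion `k`. -/
def qk : Quat := ⟨0, 0, 0, 1⟩
/-- `p = 1 - i`. -/
def qp : Quat := 1 - qi

/-- A quaternion is a Hurwitz integer if it is `(a+bi+cj+dk)/2` with
`a,b,c,d` integers which are all congruent mod `2`. -/
def IsHurwitz (q : Quat) : Prop :=
  ∃ a b c d : ℤ, a % 2 = b % 2 ∧ b % 2 = c % 2 ∧ c % 2 = d % 2 ∧
    q = ⟨(a : ℝ) / 2, (b : ℝ) / 2, (c : ℝ) / 2, (d : ℝ) / 2⟩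

/-- A unit of the ring ℋ of Hurwitz integers. -/
def IsUnitH (q : Quat) : Prop :=
  IsHurwitz q ∧ ∃ r : Quat, IsHurwitz r ∧ q * r = 1 ∧ r * q = 1

/-- Membership in the (two-sided) ideal `pℋ`. -/
def InPH (q : Quat) : Prop := ∃ h : Quat, IsHurwitz h ∧ q = qp * h

/-- The ambient space of the lattice `L = 3E₈ ⊕ H`: three pairs (the `E₈` summands)
together with the two coordinates of the hyperbolic cell `H`. -/
abbrev V3 : Type := (Fin 3 → Quat × Quat) × Quat × Quat

/-- The ℋ-valued form on `3E₈ ⊕ H`:  negative definite standard form on each `E₈`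
summand and the hyperbolic form `⟨(x₁,x₂),(y₁,y₂)⟩ = x̄₁ p̄ y₂ + x̄₂ p y₁` on `H`. -/
def ip3 (x y : V3) : Quat :=
  (∑ s : Fin 3, (-(star (x.1 s).1 * (y.1 s).1) - star (x.1 s).2 * (y.1 s).2))
    + star x.2.1 * star qp * y.2.2 + star x.2.2 * qp * y.2.1

/-- Membership in the `E₈` lattice: both coordinates Hurwitz and congruent mod `pℋ`. -/
def memE8 (q : Quat × Quat) : Prop := IsHurwitz q.1 ∧ IsHurwitz q.2 ∧ InPH (q.1 - q.2)

/-- Membership in the lattice `L = 3E₈ ⊕ H`. -/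
def memL3 (v : V3) : Prop := (∀ s, memE8 (v.1 s)) ∧ IsHurwitz v.2.1 ∧ IsHurwitz v.2.2

/-- Right scalar multiplication on the ambient space of `3E₈ ⊕ H`. -/
def rmul3 (v : V3) (q : Quat) : V3 :=
  (fun s => ((v.1 s).1 * q, (v.1 s).2 * q), v.2.1 * q, v.2.2 * q)

/-- The `μ`-reflection in a root `r` : `v ↦ v − r(1−μ)⟨r,v⟩/|r|²`. -/
def refl3 (r : V3) (μ : Quat) (v : V3) : V3 := v - rmul3 r ((1 - μ) * ip3 r v / ip3 r r)

/-- The root `a` of the diagram `D`. -/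
def rootA : V3 := (fun _ => (0, 0), 1, -1)
/-- The roots `c_s` of the diagram `D`. -/
def rootC (s : Fin 3) : V3 := (fun t => if t = s then ((1 : Quat), (-1 : Quat)) else 0, 0, 0)
/-- The roots `e_s` of the diagram `D` (with `(1,1)` in the two other `E₈` slots). -/
def rootE (s : Fin 3) : V3 := (fun t => if t = s then (0 : Quat × Quat) else (1, 1), -qi, -1)
/-- The root `f` of the diagram `D`. -/
def rootF : V3 := (fun _ => (0, qp), -(qi * qp), -qp)
/-- The roots `b_s` of the diagram `D`. -/
def rootB (s : Fin 3) : V3 := (fun t => if t = s then ((0 : Quat), qp) else 0, -1, 0)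
/-- The roots `d_s` of the diagram `D`. -/
def rootD (s : Fin 3) : V3 := (fun t => if t = s then (-qp, (0 : Quat)) else 0, 0, 0)

/-- The set of roots of `L`. -/
def Roots3 : Set V3 := {r | memL3 r ∧ ip3 r r = -2}

/-- The reflection group `R(L)` of `L = 3E₈ ⊕ H`, as the subgroup of permutations of the
ambient space generated by the `μ`-reflections in all roots of `L` (for all units `μ ≠ 1`). -/
def RL3 : Subgroup (Equiv.Perm V3) :=
  Subgroup.closure {g | ∃ r μ, r ∈ Roots3 ∧ IsUnitH μ ∧ μ ≠ 1 ∧ ∀ v, g v = refl3 r μ v}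

/-- The seven `points` of the diagram `D`. -/
def Pt : Fin 7 → V3 := ![rootA, rootC 0, rootC 1, rootC 2, rootE 0, rootE 1, rootE 2]
/-- The seven `lines` of the diagram `D`. -/
def Ln : Fin 7 → V3 := ![rootF, rootB 0, rootB 1, rootB 2, rootD 0, rootD 1, rootD 2]

open Classical in
/-- `w_P = l p̄ + Σ_{x incident to l} x`, computed from the line `Ln s`. -/
def wPof (s : Fin 7) : V3 :=
  rmul3 (Ln s) (star qp) + ∑ t : Fin 7, if ip3 (Pt t) (Ln s) = qp then Pt t else 0

open Classical in
/-- `w_L = x p + Σ_{l incident to x} l`, computed from the point `Pt t`. -/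
def wLof (t : Fin 7) : V3 :=
  rmul3 (Pt t) qp + ∑ s : Fin 7, if ip3 (Pt t) (Ln s) = qp then Ln s else 0

/-- `w_P` (computed from the line `f`). -/
def wP : V3 := wPof 0
/-- `w_L` (computed from the point `a`). -/
def wL : V3 := wLof 0

/-- An ℍ-linear isometry of `(3E₈ ⊕ H) ⊗ ℝ` permuting the 14 roots of the diagram `D`,
taking points to points and lines to lines via a collineation of `P²(𝔽₂)`. -/
def IsDiagAut (g : V3 → V3) : Prop :=
  Function.Bijective g ∧
  (∀ v w, g (v + w) = g v + g w) ∧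
  (∀ v q, g (rmul3 v q) = rmul3 (g v) q) ∧
  (∀ v w, ip3 (g v) (g w) = ip3 v w) ∧
  ∃ σ τ : Equiv.Perm (Fin 7),
    (∀ t s, ip3 (Pt t) (Ln s) = qp ↔ ip3 (Pt (σ t)) (Ln (τ s)) = qp) ∧
    (∀ t, g (Pt t) = Pt (σ t)) ∧ (∀ s, g (Ln s) = Ln (τ s))

/-!
The seven points and `w_P` form an orthogonal basis, so every collineation extends to an isometry
fixing `w_P`; it also permutes the lines, because each line is determined by its inner products with
the points and with `w_P`. A vector fixed by the isometry of a Singer cycle has equal inner products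
with all the points, and these vectors make up a 2-dimensional space containing `w_P` and `w_L`.
Conversely, diagram automorphisms fix `w_P` and `w_L` because `w_P` can be computed from any line
and `w_L` from any point.
-/

section RightHermitian

variable {D V ι : Type*} [Ring D] [AddCommGroup V] [Module Dᵐᵒᵖ V] {B : V → V →ₗ[Dᵐᵒᵖ] D}

lemma form_linearCombination_of_orthogonal {e : ι → V}
    (horth : Pairwise fun i j ↦ B (e i) (e j) = 0) (c : ι →₀ Dᵐᵒᵖ) (i : ι) :
    B (e i) (Finsupp.linearCombination Dᵐᵒᵖ e c) = B (e i) (e i) * (c i).unop := by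
  rw [Finsupp.linearCombination_apply, map_finsuppSum,
    Finsupp.sum_eq_single i (fun j _ hj ↦ by simp [horth hj.symm]) (by simp)]
  simp

lemma linearIndependent_of_orthogonal [NoZeroDivisors D] {e : ι → V}
    (horth : Pairwise fun i j ↦ B (e i) (e j) = 0) (hne : ∀ i, B (e i) (e i) ≠ 0) :
    LinearIndependent Dᵐᵒᵖ e := by
  refine linearIndependent_iff.2 fun c hc ↦ Finsupp.ext fun i ↦ ?_
  have hi := form_linearCombination_of_orthogonal horth c i
  rw [hc, map_zero, zero_eq_mul] at hi
  simpa using hi.resolve_left (hne i)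

lemma eq_of_forall_form_orthogonal_basis_eq [NoZeroDivisors D] (b : Module.Basis ι Dᵐᵒᵖ V)
    (horth : Pairwise fun i j ↦ B (b i) (b j) = 0) (hne : ∀ i, B (b i) (b i) ≠ 0) {x y : V}
    (h : ∀ i, B (b i) x = B (b i) y) : x = y := by
  refine b.ext_elem fun i ↦ MulOpposite.unop_injective (mul_left_cancel₀ (hne i) ?_)
  rw [← form_linearCombination_of_orthogonal horth, ← form_linearCombination_of_orthogonal horth,
    b.linearCombination_repr, b.linearCombination_repr, h]

lemma form_map_map_of_basis [StarRing D] (hB : ∀ x y, star (B x y) = B y x)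
    (b : Module.Basis ι Dᵐᵒᵖ V) {g : V →ₗ[Dᵐᵒᵖ] V}
    (h : ∀ i j, B (g (b i)) (g (b j)) = B (b i) (b j)) (x y : V) : B (g x) (g y) = B x y := by
  have hleft (i) : B (g (b i)) ∘ₗ g = B (b i) := b.ext (h i)
  have hright (x) : B (g x) ∘ₗ g = B x := b.ext fun i ↦ by
    rw [LinearMap.comp_apply, ← hB, ← LinearMap.comp_apply, hleft, hB]
  exact LinearMap.congr_fun (hright x) y

end RightHermitian

lemma map_sum_ite_of_equiv {M N ι κ : Type*} [AddCommMonoid M] [AddCommMonoid N] [Fintype ι]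
    [Fintype κ] (g : M →+ N) (e : ι ≃ κ) {p : ι → Prop} {q : κ → Prop} [DecidablePred p]
    [DecidablePred q] (hpq : ∀ i, p i ↔ q (e i)) {x : ι → M} {y : κ → N}
    (hxy : ∀ i, g (x i) = y (e i)) :
    g (∑ i, if p i then x i else 0) = ∑ j, if q j then y j else 0 := by
  rw [map_sum, ← e.sum_comp]
  simp only [apply_ite g, hxy, map_zero, hpq]

lemma finrank_mulOpposite_self (R : Type*) [Ring R] [StrongRankCondition Rᵐᵒᵖ] :
    Module.finrank Rᵐᵒᵖ R = 1 :=
  (MulOpposite.opLinearEquiv Rᵐᵒᵖ : R ≃ₗ[Rᵐᵒᵖ] Rᵐᵒᵖ).finrank_eq.trans (Module.finrank_self _)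

/-- The form `⟨x, ·⟩` on `(3E₈ ⊕ H) ⊗ ℝ` as a map of right `ℍ`-modules, a right module being
encoded as a module over the opposite ring. -/
def ip3Lin (x : V3) : V3 →ₗ[Quatᵐᵒᵖ] Quat where
  toFun := ip3 x
  map_add' y z := by simp only [ip3, Fin.sum_univ_three, Prod.fst_add, Prod.snd_add,
    Pi.add_apply, mul_add]; abel
  map_smul' q y := by simp [ip3, Fin.sum_univ_three, add_mul, sub_mul, mul_assoc]

lemma ip3Lin_apply (x y : V3) : ip3Lin x y = ip3 x y := rfl

lemma ip3_add_right (x y z : V3) : ip3 x (y + z) = ip3 x y + ip3 x z :=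
  map_add (ip3Lin x) y z

lemma ip3_rmul3_right (x y : V3) (q : Quat) : ip3 x (rmul3 y q) = ip3 x y * q :=
  map_smul (ip3Lin x) (MulOpposite.op q) y

lemma ip3_sum_right {ι : Type*} (s : Finset ι) (x : V3) (y : ι → V3) :
    ip3 x (∑ i ∈ s, y i) = ∑ i ∈ s, ip3 x (y i) :=
  map_sum (ip3Lin x) y s

lemma star_ip3 (x y : V3) : star (ip3 x y) = ip3 y x := by
  simp only [ip3, Fin.sum_univ_three, star_add, star_sub, star_neg, star_mul, star_star, mul_assoc]
  abel

lemma finrank_V3 : Module.finrank Quatᵐᵒᵖ V3 = 8 := by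
  have : Module.Finite Quatᵐᵒᵖ Quat :=
    Module.finite_of_finrank_pos (by simp [finrank_mulOpposite_self])
  have : Module.Free Quatᵐᵒᵖ Quat := inferInstance
  rw [Module.finrank_prod, Module.finrank_pi_fintype, Module.finrank_prod]
  simp [finrank_mulOpposite_self]

@[simp] lemma re_qi : qi.re = 0 := rfl
@[simp] lemma imI_qi : qi.imI = 1 := rfl
@[simp] lemma imJ_qi : qi.imJ = 0 := rfl
@[simp] lemma imK_qi : qi.imK = 0 := rfl

lemma qi_mul_qi : qi * qi = -1 := by
  ext <;> simp

lemma star_qi : star qi = -qi := by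
  ext <;> simp

lemma star_qp : star qp = 1 + qi := by
  simp [qp, star_qi]

lemma qi_mul_qp : qi * qp = star qp := by
  rw [star_qp, qp, mul_sub, mul_one, qi_mul_qi, sub_neg_eq_add, add_comm]

lemma qp_mul_qi : qp * qi = star qp := by
  rw [star_qp, qp, sub_mul, one_mul, qi_mul_qi, sub_neg_eq_add, add_comm]

lemma star_qp_eq_two_sub : star qp = 2 - qp := by
  rw [star_qp, qp, ← one_add_one_eq_two]
  abel

lemma qp_mul_star_qp : qp * star qp = 2 := by
  rw [star_qp, mul_add, mul_one, qp_mul_qi, star_qp_eq_two_sub, add_sub_cancel]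

lemma star_qp_mul_qp : star qp * qp = 2 := by
  rw [star_qp, add_mul, one_mul, qi_mul_qp, star_qp_eq_two_sub, add_sub_cancel]

lemma qp_ne_zero : qp ≠ 0 := fun h ↦ by
  have h1 : (1 - qi).re = 0 := congrArg (fun q : Quat ↦ q.re) h
  simp at h1

lemma two_ne_zero_quat : (2 : Quat) ≠ 0 := by
  rw [← qp_mul_star_qp]
  exact mul_ne_zero qp_ne_zero (star_ne_zero.2 qp_ne_zero)

lemma qi_add_one : qi + 1 = star qp := by
  rw [star_qp, add_comm]

lemma star_qp_add_qp : star qp + qp = 2 := by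
  rw [star_qp_eq_two_sub, sub_add_cancel]

lemma ip3_rootA (v : V3) : ip3 rootA v = star qp * v.2.2 - qp * v.2.1 := by
  simp [ip3, rootA, sub_eq_add_neg]

lemma ip3_rootC (s : Fin 3) (v : V3) : ip3 (rootC s) v = (v.1 s).2 - (v.1 s).1 := by
  fin_cases s <;> simp [ip3, rootC, Fin.sum_univ_three, sub_eq_add_neg, add_comm]

lemma ip3_rootE (s : Fin 3) (v : V3) :
    ip3 (rootE s) v =
      -∑ t, (if t = s then 0 else (v.1 t).1 + (v.1 t).2) + qp * (-v.2.1 - v.2.2) := by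
  have h : qi * star qp = -qp := by rw [star_qp, mul_add, mul_one, qi_mul_qi, qp]; abel
  fin_cases s <;>
    simp [ip3, rootE, Fin.sum_univ_three, star_qi, h, mul_add, sub_eq_add_neg, add_comm,
      add_assoc]

lemma ip3_rootF (v : V3) :
    ip3 rootF v = -∑ t, star qp * (v.1 t).2 + 2 * (-v.2.1 - v.2.2) := by
  simp [ip3, rootF, Fin.sum_univ_three, qi_mul_qp, qp_mul_star_qp, star_qp_mul_qp, mul_add,
    sub_eq_add_neg, add_comm, add_assoc]

lemma ip3_rootB (s : Fin 3) (v : V3) :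
    ip3 (rootB s) v = -(star qp * ((v.1 s).2 + v.2.2)) := by
  fin_cases s <;> simp [ip3, rootB, Fin.sum_univ_three, mul_add, sub_eq_add_neg, add_comm]

lemma ip3_rootD (s : Fin 3) (v : V3) : ip3 (rootD s) v = star qp * (v.1 s).1 := by
  fin_cases s <;> simp [ip3, rootD, Fin.sum_univ_three]

/-- The points lying on a line of `P²(𝔽₂)`, both given by their indices in `Pt` and `Ln`. -/
def pointsOn : Fin 7 → Finset (Fin 7) :=
  ![{1, 2, 3}, {0, 1, 4}, {0, 2, 5}, {0, 3, 6}, {1, 5, 6}, {2, 4, 6}, {3, 4, 5}]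

/-- The lines through a point of `P²(𝔽₂)`, both given by their indices in `Ln` and `Pt`. -/
def linesThrough (t : Fin 7) : Finset (Fin 7) := {s | t ∈ pointsOn s}

lemma mem_linesThrough {t s : Fin 7} : s ∈ linesThrough t ↔ t ∈ pointsOn s := by
  simp [linesThrough]

lemma card_pointsOn_inter :
    ∀ s s', #(pointsOn s ∩ pointsOn s') = if s = s' then 3 else 1 := by
  decide

lemma card_linesThrough_inter :
    ∀ t t', #(linesThrough t ∩ linesThrough t') = if t = t' then 3 else 1 := by
  decide

/-- The action on points of a Singer cycle, a collineation of order 7. -/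
def singerPoint : Equiv.Perm (Fin 7) := c[0, 1, 2, 4, 3, 6, 5]

/-- The action on lines of the Singer cycle. -/
def singerLine : Equiv.Perm (Fin 7) := c[0, 5, 6, 3, 4, 2, 1]

lemma singerPoint_mem_pointsOn_singerLine :
    ∀ t s, singerPoint t ∈ pointsOn (singerLine s) ↔ t ∈ pointsOn s := by
  decide

lemma exists_singerPoint_pow_apply_zero :
    ∀ t, ∃ n : Fin 7, (singerPoint ^ (n : ℕ)) 0 = t := by
  decide

lemma ip3_Pt_Pt (t t' : Fin 7) : ip3 (Pt t) (Pt t') = if t = t' then -2 else 0 := by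
  fin_cases t <;> fin_cases t' <;>
    simp only [Pt, Fin.isValue, Fin.reduceFinMk, Fin.zero_eta, Fin.mk_one, Matrix.cons_val,
      ip3_rootA, ip3_rootC, ip3_rootE] <;>
    simp [rootA, rootC, rootE, Fin.sum_univ_three, qp_mul_star_qp, star_qp_add_qp, qi_add_one,
      qp_mul_qi, ← neg_add'] <;>
    norm_num

lemma ip3_Pt_Ln (t s : Fin 7) : ip3 (Pt t) (Ln s) = if t ∈ pointsOn s then qp else 0 := by
  fin_cases t <;> fin_cases s <;>
    simp only [Pt, Ln, pointsOn, Fin.isValue, Fin.reduceFinMk, Fin.zero_eta, Fin.mk_one,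
      Matrix.cons_val, ip3_rootA, ip3_rootC, ip3_rootE] <;>
    simp [rootF, rootB, rootD, Fin.sum_univ_three, star_qp_mul_qp, qp_mul_star_qp,
      star_qp_add_qp, qi_mul_qp, mul_two]

lemma ip3_Ln_Ln (s s' : Fin 7) : ip3 (Ln s) (Ln s') = if s = s' then -2 else 0 := by
  fin_cases s <;> fin_cases s' <;>
    simp only [Ln, Fin.isValue, Fin.reduceFinMk, Fin.zero_eta, Fin.mk_one, Matrix.cons_val,
      ip3_rootF, ip3_rootB, ip3_rootD] <;>
    simp [rootF, rootB, rootD, Fin.sum_univ_three, star_qp_mul_qp, qi_mul_qp, star_qp_add_qp]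
  norm_num

lemma ip3_Ln_Pt (s t : Fin 7) : ip3 (Ln s) (Pt t) = if t ∈ pointsOn s then star qp else 0 := by
  rw [← star_ip3, ip3_Pt_Ln, apply_ite star, star_zero]

lemma ip3_Pt_Ln_eq_qp_iff (t s : Fin 7) : ip3 (Pt t) (Ln s) = qp ↔ t ∈ pointsOn s := by
  rw [ip3_Pt_Ln, ite_eq_left_iff]
  exact ⟨fun h ↦ by_contra fun hts ↦ qp_ne_zero (h hts).symm, fun h hts ↦ absurd h hts⟩

lemma wPof_eq_sum_pointsOn (s : Fin 7) :
    wPof s = rmul3 (Ln s) (star qp) + ∑ t ∈ pointsOn s, Pt t := by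
  simp [wPof, ip3_Pt_Ln_eq_qp_iff]

lemma wLof_eq_sum_linesThrough (t : Fin 7) :
    wLof t = rmul3 (Pt t) qp + ∑ s ∈ linesThrough t, Ln s := by
  simp [wLof, ip3_Pt_Ln_eq_qp_iff, ← mem_linesThrough]

lemma ip3_Pt_wPof (t s : Fin 7) : ip3 (Pt t) (wPof s) = 0 := by
  rw [wPof_eq_sum_pointsOn, ip3_add_right, ip3_rmul3_right, ip3_sum_right, ip3_Pt_Ln]
  simp only [ip3_Pt_Pt, sum_ite_eq]
  split_ifs <;> simp [qp_mul_star_qp]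

lemma ip3_wPof_Pt (s t : Fin 7) : ip3 (wPof s) (Pt t) = 0 := by
  rw [← star_ip3, ip3_Pt_wPof, star_zero]

lemma ip3_Ln_wPof (s s' : Fin 7) : ip3 (Ln s) (wPof s') = star qp := by
  have hsum : ∑ t ∈ pointsOn s', ip3 (Ln s) (Pt t) = #(pointsOn s' ∩ pointsOn s) • star qp := by
    simp only [ip3_Ln_Pt, sum_ite_mem, sum_const]
  rw [wPof_eq_sum_pointsOn, ip3_add_right, ip3_rmul3_right, ip3_sum_right, hsum, ip3_Ln_Ln,
    card_pointsOn_inter]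
  obtain rfl | h := eq_or_ne s s'
  · rw [if_pos rfl, if_pos rfl, nsmul_eq_mul, ← add_mul]
    norm_num
  · simp [h, h.symm]

lemma ip3_wPof_Ln (s s' : Fin 7) : ip3 (wPof s) (Ln s') = qp := by
  rw [← star_ip3, ip3_Ln_wPof, star_star]

lemma ip3_wPof_wPof (s s' : Fin 7) : ip3 (wPof s) (wPof s') = 2 := by
  rw [wPof_eq_sum_pointsOn s', ip3_add_right, ip3_rmul3_right, ip3_sum_right, ip3_wPof_Ln,
    qp_mul_star_qp]
  simp [ip3_wPof_Pt]

lemma ip3_Pt_wLof (t t' : Fin 7) : ip3 (Pt t) (wLof t') = qp := by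
  have hsum : ∑ s ∈ linesThrough t', ip3 (Pt t) (Ln s) =
      #(linesThrough t' ∩ linesThrough t) • qp := by
    simp only [ip3_Pt_Ln, ← mem_linesThrough, sum_ite_mem, sum_const]
  rw [wLof_eq_sum_linesThrough, ip3_add_right, ip3_rmul3_right, ip3_sum_right, hsum, ip3_Pt_Pt,
    card_linesThrough_inter]
  obtain rfl | h := eq_or_ne t t'
  · rw [if_pos rfl, if_pos rfl, nsmul_eq_mul, ← add_mul]
    norm_num
  · simp [h, h.symm]

lemma ip3_wPof_wLof (s t : Fin 7) : ip3 (wPof s) (wLof t) = 3 * qp := by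
  have hcard : #(linesThrough t) = 3 := by simpa using card_linesThrough_inter t t
  rw [wLof_eq_sum_linesThrough, ip3_add_right, ip3_rmul3_right, ip3_sum_right, ip3_wPof_Pt]
  simp [ip3_wPof_Ln, hcard]

/-- The seven points of the diagram together with `w_P`, indexed by adjoining an element to the
index set of the points. -/
def frame (o : Option (Fin 7)) : V3 := o.elim wP Pt

lemma pairwise_ip3Lin_frame_eq_zero : Pairwise fun o o' ↦ ip3Lin (frame o) (frame o') = 0 := by
  rintro (_ | t) (_ | t') h
  · exact absurd rfl h
  · exact ip3_wPof_Pt 0 t'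
  · exact ip3_Pt_wPof t 0
  · exact (ip3_Pt_Pt t t').trans (if_neg (mt (congrArg some) h))

lemma ip3Lin_frame_self_ne_zero (o : Option (Fin 7)) : ip3Lin (frame o) (frame o) ≠ 0 := by
  cases o with
  | none => exact (ip3_wPof_wPof 0 0).trans_ne two_ne_zero_quat
  | some t => exact ((ip3_Pt_Pt t t).trans (if_pos rfl)).trans_ne (neg_ne_zero.2 two_ne_zero_quat)

/-- The orthogonal basis of the right `ℍ`-space `(3E₈ ⊕ H) ⊗ ℝ` formed by the points and `w_P`. -/
def frameBasis : Module.Basis (Option (Fin 7)) Quatᵐᵒᵖ V3 :=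
  basisOfLinearIndependentOfCardEqFinrank
    (linearIndependent_of_orthogonal pairwise_ip3Lin_frame_eq_zero ip3Lin_frame_self_ne_zero)
    (by rw [finrank_V3, Fintype.card_option, Fintype.card_fin])

lemma coe_frameBasis : ⇑frameBasis = frame :=
  coe_basisOfLinearIndependentOfCardEqFinrank _ _

lemma eq_of_ip3_Pt_eq_of_ip3_wP_eq {x y : V3} (hP : ∀ t, ip3 (Pt t) x = ip3 (Pt t) y)
    (hw : ip3 wP x = ip3 wP y) : x = y := by
  refine eq_of_forall_form_orthogonal_basis_eq (B := ip3Lin) frameBasis ?_ ?_ ?_ <;>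
    rw [coe_frameBasis]
  · exact pairwise_ip3Lin_frame_eq_zero
  · exact ip3Lin_frame_self_ne_zero
  · rintro (_ | t)
    exacts [hw, hP t]

lemma wPof_eq_wP (s : Fin 7) : wPof s = wP :=
  eq_of_ip3_Pt_eq_of_ip3_wP_eq (fun t ↦ (ip3_Pt_wPof t s).trans (ip3_Pt_wPof t 0).symm)
    ((ip3_wPof_wPof 0 s).trans (ip3_wPof_wPof 0 0).symm)

lemma wLof_eq_wL (t : Fin 7) : wLof t = wL :=
  eq_of_ip3_Pt_eq_of_ip3_wP_eq (fun t' ↦ (ip3_Pt_wLof t' t).trans (ip3_Pt_wLof t' 0).symm)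
    ((ip3_wPof_wLof 0 t).trans (ip3_wPof_wLof 0 0).symm)

lemma exists_eq_rmul3_wP_add_rmul3_wL {v : V3} (hv : ∀ t, ip3 (Pt t) v = ip3 (Pt 0) v) :
    ∃ q₁ q₂ : Quat, v = rmul3 wP q₁ + rmul3 wL q₂ := by
  refine ⟨2⁻¹ * (ip3 wP v - 3 * ip3 (Pt 0) v), qp⁻¹ * ip3 (Pt 0) v,
    eq_of_ip3_Pt_eq_of_ip3_wP_eq (fun t ↦ ?_) ?_⟩
  · rw [ip3_add_right, ip3_rmul3_right, ip3_rmul3_right, wP, wL, ip3_Pt_wPof, ip3_Pt_wLof,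
      zero_mul, zero_add, mul_inv_cancel_left₀ qp_ne_zero, hv]
  · have hPP : ip3 wP wP = 2 := ip3_wPof_wPof 0 0
    have hPL : ip3 wP wL = 3 * qp := ip3_wPof_wLof 0 0
    rw [ip3_add_right, ip3_rmul3_right, ip3_rmul3_right, hPP, hPL,
      mul_inv_cancel_left₀ two_ne_zero_quat, mul_assoc, mul_inv_cancel_left₀ qp_ne_zero,
      sub_add_cancel]

/-- The linear automorphism fixing `w_P` and permuting the points by `σ`. -/
def pointMap (σ : Equiv.Perm (Fin 7)) : V3 ≃ₗ[Quatᵐᵒᵖ] V3 :=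
  frameBasis.equiv frameBasis σ.optionCongr

lemma pointMap_Pt (σ : Equiv.Perm (Fin 7)) (t : Fin 7) : pointMap σ (Pt t) = Pt (σ t) := by
  have h := frameBasis.equiv_apply (some t) frameBasis σ.optionCongr
  rwa [coe_frameBasis] at h

lemma pointMap_wP (σ : Equiv.Perm (Fin 7)) : pointMap σ wP = wP := by
  have h := frameBasis.equiv_apply none frameBasis σ.optionCongr
  rwa [coe_frameBasis] at h

lemma ip3_pointMap (σ : Equiv.Perm (Fin 7)) (x y : V3) :
    ip3 (pointMap σ x) (pointMap σ y) = ip3 x y := by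
  refine form_map_map_of_basis (B := ip3Lin) star_ip3 frameBasis
    (g := (pointMap σ).toLinearMap) ?_ x y
  have hwP (t) : ip3 wP (Pt t) = 0 := ip3_wPof_Pt 0 t
  have hPw (t) : ip3 (Pt t) wP = 0 := ip3_Pt_wPof t 0
  rw [coe_frameBasis]
  rintro (_ | t) (_ | t') <;>
    simp [frame, ip3Lin_apply, pointMap_Pt, pointMap_wP, ip3_Pt_Pt, hwP, hPw]

lemma pointMap_Ln {σ τ : Equiv.Perm (Fin 7)}
    (hστ : ∀ t s, σ t ∈ pointsOn (τ s) ↔ t ∈ pointsOn s) (s : Fin 7) :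
    pointMap σ (Ln s) = Ln (τ s) := by
  refine eq_of_ip3_Pt_eq_of_ip3_wP_eq (fun t ↦ ?_) ?_
  · obtain ⟨t, rfl⟩ := σ.surjective t
    rw [← pointMap_Pt, ip3_pointMap, pointMap_Pt]
    simp only [ip3_Pt_Ln, hστ]
  · rw [← pointMap_wP σ, ip3_pointMap, pointMap_wP]
    exact (ip3_wPof_Ln 0 s).trans (ip3_wPof_Ln 0 (τ s)).symm

lemma isDiagAut_pointMap {σ τ : Equiv.Perm (Fin 7)}
    (hστ : ∀ t s, σ t ∈ pointsOn (τ s) ↔ t ∈ pointsOn s) : IsDiagAut (pointMap σ) :=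
  ⟨(pointMap σ).bijective, map_add (pointMap σ),
    fun v q ↦ map_smul (pointMap σ) (MulOpposite.op q) v, ip3_pointMap σ, σ, τ,
    fun t s ↦ by rw [ip3_Pt_Ln_eq_qp_iff, ip3_Pt_Ln_eq_qp_iff, hστ], pointMap_Pt σ,
    pointMap_Ln hστ⟩

namespace IsDiagAut

variable {g : V3 → V3}

lemma map_wP (hg : IsDiagAut g) : g wP = wP := by
  classical
  obtain ⟨-, hadd, hmul, -, σ, τ, hinc, hPt, hLn⟩ := hg
  have h : g (wPof 0) = wPof (τ 0) := by
    rw [wPof, wPof, hadd, hmul, hLn]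
    exact congrArg _ (map_sum_ite_of_equiv (AddMonoidHom.mk' g hadd) σ (hinc · 0) hPt)
  rw [wP, h, wPof_eq_wP, wP]

lemma map_wL (hg : IsDiagAut g) : g wL = wL := by
  classical
  obtain ⟨-, hadd, hmul, -, σ, τ, hinc, hPt, hLn⟩ := hg
  have h : g (wLof 0) = wLof (σ 0) := by
    rw [wLof, wLof, hadd, hmul, hPt]
    exact congrArg _ (map_sum_ite_of_equiv (AddMonoidHom.mk' g hadd) τ (hinc 0) hLn)
  rw [wL, h, wLof_eq_wL, wL]

lemma map_rmul3_wP_add_rmul3_wL (hg : IsDiagAut g) (q₁ q₂ : Quat) :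
    g (rmul3 wP q₁ + rmul3 wL q₂) = rmul3 wP q₁ + rmul3 wL q₂ := by
  rw [hg.2.1, hg.2.2.1, hg.2.2.1, hg.map_wP, hg.map_wL]

end IsDiagAut

lemma ip3_Pt_eq_of_pointMap_singerPoint_eq {v : V3} (hv : pointMap singerPoint v = v)
    (t : Fin 7) : ip3 (Pt t) v = ip3 (Pt 0) v := by
  have hstep (t) : ip3 (Pt (singerPoint t)) v = ip3 (Pt t) v := by
    conv_lhs => rw [← hv, ← pointMap_Pt, ip3_pointMap]
  have hpow (n : ℕ) : ip3 (Pt ((singerPoint ^ n) 0)) v = ip3 (Pt 0) v := by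
    induction n with
    | zero => rfl
    | succ n ih => rw [pow_succ', Equiv.Perm.mul_apply, hstep, ih]
  obtain ⟨n, rfl⟩ := exists_singerPoint_pow_apply_zero t
  exact hpow n

/-- The set of vectors fixed by all diagram automorphisms is exactly
the right ℍ-span of `w_P` and `w_L`. -/
theorem fixed_space_of_diagram_automorphisms :
    {v : V3 | ∀ g, IsDiagAut g → g v = v} =
      {v : V3 | ∃ q₁ q₂ : Quat, v = rmul3 wP q₁ + rmul3 wL q₂} := by
  ext v
  constructor
  · intro hv
    have hsinger := hv _ (isDiagAut_pointMap singerPoint_mem_pointsOn_singerLine)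
    exact exists_eq_rmul3_wP_add_rmul3_wL (ip3_Pt_eq_of_pointMap_singerPoint_eq hsinger)
  · rintro ⟨q₁, q₂, rfl⟩ g hg
    exact hg.map_rmul3_wP_add_rmul3_wL q₁ q₂
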